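/- Let α ∈ C(ℝⁿ;𝕊ⁿ(θ₀)) and set H(x,p) := α(x)p·p + b(x)·p, where b is Lipschitz with b(0)=0, the origin is globally asymptotically stable for Ẋ = b(X), and Ω is a bounded C¹ domain with 0 ∈ Ω and b·ν < 0 on ∂Ω. If v ∈ Lip(Ω̄) is a viscosity subsolution of H(x,Dv) = 0 in Ω, w ∈ LSC(Ω̄) is a viscosity supersolution of H(x,Dw) = 0 on all of Ω̄ (the state-constraints condition: the supersolution property holds at every point of the closure, including boundary points), and v(0) ≤ w(0), then v ≤ w on Ω̄. -/

import Mathlib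

open Set Filter Metric Topology
open scoped ENNReal

noncomputable section

/-- `n`-dimensional Euclidean space. -/
abbrev Eu (n : ℕ) := EuclideanSpace ℝ (Fin n)

variable {n : ℕ}

/-- Euclidean dot product. -/
def dotp (x y : Eu n) : ℝ := ∑ i, x i * y i

/-- The quadratic form `A p · p` of a matrix `A`. -/
def mquad (A : Matrix (Fin n) (Fin n) ℝ) (p : Eu n) : ℝ := ∑ i, ∑ j, A i j * p i * p j

/-- `A ∈ 𝕊ⁿ(θ)`: symmetric with `θ I ≤ A ≤ θ⁻¹ I`. -/
def memS (θ : ℝ) (A : Matrix (Fin n) (Fin n) ℝ) : Prop :=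
  A.IsSymm ∧ ∀ p : Eu n, θ * ‖p‖ ^ 2 ≤ mquad A p ∧ mquad A p ≤ θ⁻¹ * ‖p‖ ^ 2

/-- order of symmetric matrices (via quadratic forms). -/
def mle (A B : Matrix (Fin n) (Fin n) ℝ) : Prop := ∀ p : Eu n, mquad A p ≤ mquad B p

/-- trace of the product `A·H`. -/
def trMul (A H : Matrix (Fin n) (Fin n) ℝ) : ℝ := ∑ i, ∑ j, A i j * H j i

/-- the Pucci maximal operator associated with `𝕊ⁿ(θ)`. -/
def pucci (θ : ℝ) (X : Matrix (Fin n) (Fin n) ℝ) : ℝ :=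
  sSup ((fun A => trMul A X) '' {A | memS θ A})

/-- time derivative of `u(x,t)`. -/
def tD (u : Eu n → ℝ → ℝ) (x : Eu n) (t : ℝ) : ℝ := deriv (u x) t

/-- spatial gradient of `u(x,t)`. -/
def sG (u : Eu n → ℝ → ℝ) (x : Eu n) (t : ℝ) : Eu n := gradient (fun y => u y t) x

/-- spatial Hessian matrix of `u(x,t)`. -/
def sH (u : Eu n → ℝ → ℝ) (x : Eu n) (t : ℝ) : Matrix (Fin n) (Fin n) ℝ :=
  fun i j => fderiv ℝ (fun y => sG u y t i) x (EuclideanSpace.single j 1)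

/-- Hessian matrix of a static function. -/
def hessS (v : Eu n → ℝ) (x : Eu n) : Matrix (Fin n) (Fin n) ℝ :=
  fun i j => fderiv ℝ (fun y => gradient v y i) x (EuclideanSpace.single j 1)

/-- closed parabolic cylinder `Q̄_T = closure Ω × [0,T]` (with `T ∈ (0,∞]`). -/
def cylC (Ω : Set (Eu n)) (T : ℝ≥0∞) : Set (Eu n × ℝ) :=
  {p | p.1 ∈ closure Ω ∧ 0 ≤ p.2 ∧ ENNReal.ofReal p.2 ≤ T}

/-- open parabolic cylinder `Q_T = Ω × (0,T)`. -/
def cylO (Ω : Set (Eu n)) (T : ℝ≥0∞) : Set (Eu n × ℝ) :=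
  {p | p.1 ∈ Ω ∧ 0 < p.2 ∧ ENNReal.ofReal p.2 < T}

/-- `u ∈ C^{2,1}(Q_T)`. -/
def C21 (u : Eu n → ℝ → ℝ) (Ω : Set (Eu n)) (T : ℝ≥0∞) : Prop :=
  (∀ x ∈ Ω, ∀ t : ℝ, 0 < t → ENNReal.ofReal t < T →
     ContDiffAt ℝ 2 (fun y => u y t) x ∧ DifferentiableAt ℝ (u x) t) ∧
  ContinuousOn (fun p : Eu n × ℝ => tD u p.1 p.2) (cylO Ω T) ∧
  ContinuousOn (fun p : Eu n × ℝ => sH u p.1 p.2) (cylO Ω T)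

/-- `u ∈ C(Q̄_T) ∩ C^{2,1}(Q_T)`. -/
def Classical21 (u : Eu n → ℝ → ℝ) (Ω : Set (Eu n)) (T : ℝ≥0∞) : Prop :=
  ContinuousOn (fun p : Eu n × ℝ => u p.1 p.2) (cylC Ω T) ∧ C21 u Ω T

/-- a coefficient field in `C(Q̄_T; 𝕊ⁿ(θ))`. -/
def MatC (θ : ℝ) (A : Eu n → ℝ → Matrix (Fin n) (Fin n) ℝ) (Ω : Set (Eu n))
    (T : ℝ≥0∞) : Prop :=
  ContinuousOn (fun p : Eu n × ℝ => A p.1 p.2) (cylC Ω T) ∧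
  ∀ p ∈ cylC Ω T, memS θ (A p.1 p.2)

/-- `u` is a classical solution of `u_t = ε tr[A D²u] + b·Du` in `Q_T`. -/
def SolveL (ε : ℝ) (A : Eu n → ℝ → Matrix (Fin n) (Fin n) ℝ) (b : Eu n → Eu n)
    (u : Eu n → ℝ → ℝ) (Ω : Set (Eu n)) (T : ℝ≥0∞) : Prop :=
  ∀ x ∈ Ω, ∀ t : ℝ, 0 < t → ENNReal.ofReal t < T →
    tD u x t = ε * trMul (A x t) (sH u x t) + dotp (b x) (sG u x t)

/-- `u` is a classical subsolution of `(L)` in `Q_T`. -/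
def SubsolL (ε : ℝ) (A : Eu n → ℝ → Matrix (Fin n) (Fin n) ℝ) (b : Eu n → Eu n)
    (u : Eu n → ℝ → ℝ) (Ω : Set (Eu n)) (T : ℝ≥0∞) : Prop :=
  ∀ x ∈ Ω, ∀ t : ℝ, 0 < t → ENNReal.ofReal t < T →
    tD u x t ≤ ε * trMul (A x t) (sH u x t) + dotp (b x) (sG u x t)

/-- `u` is a classical supersolution of `(L)` in `Q_T`. -/
def SupersolL (ε : ℝ) (A : Eu n → ℝ → Matrix (Fin n) (Fin n) ℝ) (b : Eu n → Eu n)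
    (u : Eu n → ℝ → ℝ) (Ω : Set (Eu n)) (T : ℝ≥0∞) : Prop :=
  ∀ x ∈ Ω, ∀ t : ℝ, 0 < t → ENNReal.ofReal t < T →
    ε * trMul (A x t) (sH u x t) + dotp (b x) (sG u x t) ≤ tD u x t

/-- viscosity subsolution of `H(x,Du) = 0` on `A`. -/
def ViscSub (H : Eu n → Eu n → ℝ) (A : Set (Eu n)) (u : Eu n → ℝ) : Prop :=
  ∀ φ : Eu n → ℝ, ContDiff ℝ 1 φ → ∀ x ∈ A,
    IsLocalMaxOn (fun y => u y - φ y) A x → H x (gradient φ x) ≤ 0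

/-- viscosity supersolution of `H(x,Du) = 0` on `A`. -/
def ViscSup (H : Eu n → Eu n → ℝ) (A : Set (Eu n)) (u : Eu n → ℝ) : Prop :=
  ∀ φ : Eu n → ℝ, ContDiff ℝ 1 φ → ∀ x ∈ A,
    IsLocalMinOn (fun y => u y - φ y) A x → 0 ≤ H x (gradient φ x)

/-- the Hamiltonian `H_α(x,p) = α(x) p·p + b(x)·p`. -/
def Ham (α : Eu n → Matrix (Fin n) (Fin n) ℝ) (b : Eu n → Eu n) (x p : Eu n) : ℝ :=
  mquad (α x) p + dotp (b x) p

/-- the quasi-potential `V_α`: the pointwise supremum (= maximal element) of all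
Lipschitz viscosity subsolutions of `H_α(x,Du)=0` in `Ω` vanishing at the origin. -/
def Vq (α : Eu n → Matrix (Fin n) (Fin n) ℝ) (b : Eu n → Eu n) (Ω : Set (Eu n))
    (x : Eu n) : ℝ :=
  sSup {r | ∃ u : Eu n → ℝ, (∃ K : NNReal, LipschitzOnWith K u (closure Ω)) ∧
    u 0 = 0 ∧ ViscSub (Ham α b) Ω u ∧ r = u x}

/-- `M_α = min_{∂Ω} V_α`. -/
def Mq (α : Eu n → Matrix (Fin n) (Fin n) ℝ) (b : Eu n → Eu n) (Ω : Set (Eu n)) : ℝ :=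
  sInf (Vq α b Ω '' frontier Ω)

/-- `argmin (V_α | ∂Ω)`. -/
def argminV (α : Eu n → Matrix (Fin n) (Fin n) ℝ) (b : Eu n → Eu n)
    (Ω : Set (Eu n)) : Set (Eu n) :=
  {x ∈ frontier Ω | ∀ y ∈ frontier Ω, Vq α b Ω x ≤ Vq α b Ω y}

/-- `Σ_α^m = {x ∈ Ω̄ : V_α(x) ≤ m}`. -/
def SigmaM (α : Eu n → Matrix (Fin n) (Fin n) ℝ) (b : Eu n → Eu n) (Ω : Set (Eu n))
    (m : ℝ) : Set (Eu n) :=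
  {x ∈ closure Ω | Vq α b Ω x ≤ m}

/-- `Ω` is a bounded `C¹` domain with outward unit normal `ν`. -/
def IsBdC1With (Ω : Set (Eu n)) (ν : Eu n → Eu n) : Prop :=
  IsOpen Ω ∧ Bornology.IsBounded Ω ∧
  ∃ ρ : Eu n → ℝ, ContDiff ℝ 1 ρ ∧ Ω = {x | ρ x < 0} ∧
    ∀ x ∈ frontier Ω, gradient ρ x ≠ 0 ∧ ν x = ‖gradient ρ x‖⁻¹ • gradient ρ x

/-- `X` is the flow of `b`, and the origin is globally asymptotically stable. -/
def GAS (b : Eu n → Eu n) (X : ℝ → Eu n → Eu n) : Prop :=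
  (∀ x, X 0 x = x) ∧ (∀ x t, HasDerivAt (fun s => X s x) (b (X t x)) t) ∧
  (∀ x, Tendsto (fun t => X t x) atTop (nhds 0)) ∧
  (∀ ε > (0:ℝ), ∃ δ > (0:ℝ), ∀ x : Eu n, ‖x‖ < δ → ∀ t ≥ (0:ℝ), ‖X t x‖ < ε)

/-- `Ω_δ = {x ∈ Ω : dist(x,∂Ω) > δ}`. -/
def Omd (Ω : Set (Eu n)) (δ : ℝ) : Set (Eu n) := {x ∈ Ω | δ < infDist x (frontier Ω)}

/-- `Ω^Π_δ = {x ∈ Ω̄ : dist(x, ∂Ω \ Π) > δ}`. -/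
def OmPid (Ω Pset : Set (Eu n)) (δ : ℝ) : Set (Eu n) :=
  {x ∈ closure Ω | δ < infDist x (frontier Ω \ Pset)}

/-- the standing assumptions (B). -/
structure SettingB (n : ℕ) where
  Ω : Set (Eu n)
  ν : Eu n → Eu n
  g : Eu n → ℝ
  θ₀ : ℝ
  a : Eu n → ℝ → Matrix (Fin n) (Fin n) ℝ
  b : Eu n → Eu n
  b₀ : ℝ
  r₀ : ℝ
  θ₀_mem : θ₀ ∈ Set.Ioc (0 : ℝ) 1
  domain : IsBdC1With Ω ν
  zero_mem : (0 : Eu n) ∈ Ω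
  g_cont : ContinuousOn g (closure Ω)
  a_cont : ContinuousOn (fun p : Eu n × ℝ => a p.1 p.2) (closure Ω ×ˢ Set.univ)
  a_mem : ∀ x ∈ closure Ω, ∀ c : ℝ, memS θ₀ (a x c)
  b_lip : ∃ K : NNReal, LipschitzWith K b
  b_zero : b 0 = 0
  b_gas : ∃ X : ℝ → Eu n → Eu n, GAS b X
  b_inward : ∀ x ∈ frontier Ω, dotp (b x) (ν x) < 0
  b₀_pos : 0 < b₀
  r₀_pos : 0 < r₀
  ball_sub : closedBall (0 : Eu n) r₀ ⊆ Ω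
  b_coerc : ∀ x ∈ ball (0 : Eu n) r₀, dotp (b x) x ≤ -b₀ * ‖x‖ ^ 2

namespace SettingB

variable (S : SettingB n)

/-- the quasi-potential `V^c` associated with `(a(·,c), b)`. -/
def Vc (c : ℝ) : Eu n → ℝ := Vq (fun x => S.a x c) S.b S.Ω

/-- `M(c) = min_{∂Ω} V^c`. -/
def M (c : ℝ) : ℝ := sInf (S.Vc c '' frontier S.Ω)

/-- `G(c) = {g(x) : x ∈ argmin(V^c|∂Ω)}`. -/
def Gset (c : ℝ) : Set ℝ := S.g '' argminV (fun x => S.a x c) S.b S.Ω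

/-- `G⁺(c) = max G(c)`. -/
def Gp (c : ℝ) : ℝ := sSup (S.Gset c)

/-- `G⁻(c) = min G(c)`. -/
def Gm (c : ℝ) : ℝ := sInf (S.Gset c)

/-- `c₀ = g(0)`. -/
def c0 : ℝ := S.g 0

/-- `g_min = min_{Ω̄} g`. -/
def gmin : ℝ := sInf (S.g '' closure S.Ω)

/-- `g_max = max_{Ω̄} g`. -/
def gmax : ℝ := sSup (S.g '' closure S.Ω)

/-- the crossing value `c₁`. -/
def c1 : ℝ :=
  if S.c0 ≤ S.Gp S.c0 then sInf {c | S.c0 ≤ c ∧ S.Gm c ≤ c}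
  else sSup {c | c ≤ S.c0 ∧ c ≤ S.Gp c}

/-- the function `c̄ : (0,∞) → I_g`. -/
def cbar (l : ℝ) : ℝ :=
  if l < S.M S.c0 ∨ S.c1 = S.c0 then S.c0
  else if S.c0 < S.c1 then min S.c1 (sInf {c | c ∈ Set.Icc S.c0 S.c1 ∧ S.M c = l})
  else max S.c1 (sSup {c | c ∈ Set.Icc S.c1 S.c0 ∧ S.M c = l})

/-- assumption (FK13): `G⁺(c₀) = G⁻(c₀)`. -/
def FK13 : Prop := S.Gp S.c0 = S.Gm S.c0

/-- assumption (FK12). -/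
def FK12 : Prop :=
  ∀ δ₀ > (0:ℝ), ∃ δ ∈ Set.Ioc (0:ℝ) δ₀,
    (S.c1 ≤ S.c0 ∧ S.gmin < S.c1 → S.c1 - δ < S.Gm (S.c1 - δ)) ∧
    (S.c0 ≤ S.c1 ∧ S.c1 < S.gmax → S.Gp (S.c1 + δ) < S.c1 + δ)

/-- `u` is a classical (`C(Q̄) ∩ C^{2,1}(Q)`) solution of the quasi-linear equation (QL). -/
def SolvesQL (ε : ℝ) (u : Eu n → ℝ → ℝ) : Prop :=
  Classical21 u S.Ω ⊤ ∧ SolveL ε (fun x t => S.a x (u x t)) S.b u S.Ω ⊤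

/-- the boundary condition (BC): `u = g` on the parabolic boundary of `Q`. -/
def BC (u : Eu n → ℝ → ℝ) : Prop :=
  (∀ x ∈ closure S.Ω, u x 0 = S.g x) ∧ ∀ x ∈ frontier S.Ω, ∀ t > (0:ℝ), u x t = S.g x

end SettingB

/-!
A maximum point of `u - w` over `closure Ω` may lie on the boundary, where only `w` satisfies its
equation. Soner's doubling of variables, with a penalty shifted by `ε • η` along an inward
direction `η`, keeps the variable of `u` inside `Ω` and yields a common limiting superdifferential
of `u` and subdifferential of `w`. Hence `u - w` cannot be maximal at a point where `u` is a
strict subsolution.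

Take `u = (1 - l) v + l f`, where `f` is a small multiple of the Lyapunov function
`∫₀ᵀ ‖X t x‖ dt`. Since the flow contracts `closure Ω` into a small ball by time `T`, `f` is a
strict subsolution off a slightly larger ball around `0`, and by convexity of the Hamiltonian so
is `u`. The maximum is therefore attained close to `0`; let the ball shrink and then `l → 0`.
-/

section Superdifferential

variable {E : Type*} [NormedAddCommGroup E] [InnerProductSpace ℝ E] [CompleteSpace E]
  {A U : Set E} {u φ : E → ℝ} {x p : E}

/-- The graph of the (viscosity) superdifferential of `u` relative to `A`: pairs `(x, p)` such
that `p` is the gradient at `x ∈ A` of a `C¹` function touching `u` from above at `x`, among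
points of `A`. -/
def superdiffGraph (A : Set E) (u : E → ℝ) : Set (E × E) :=
  {z | z.1 ∈ A ∧ ∃ φ : E → ℝ, ContDiff ℝ 1 φ ∧ IsLocalMaxOn (fun y => u y - φ y) A z.1 ∧
    HasGradientAt φ z.2 z.1}

lemma hasGradientAt_const_mul_norm_sub_sq (c : ℝ) (a x : E) :
    HasGradientAt (fun y => c * ‖y - a‖ ^ 2) ((2 * c) • (x - a)) x := by
  rw [hasGradientAt_iff_hasFDerivAt]
  refine (((hasFDerivAt_id x).sub_const a).norm_sq.const_mul c).congr_fderiv ?_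
  ext y
  simp
  ring

lemma continuous_gradient_of_contDiff (hφ : ContDiff ℝ 1 φ) : Continuous (gradient φ) :=
  (InnerProductSpace.toDual ℝ E).symm.continuous.comp (hφ.continuous_fderiv one_ne_zero)

lemma add_gradient_mem_superdiffGraph (hφ : ContDiff ℝ 1 φ)
    (hxp : (x, p) ∈ superdiffGraph A fun y => u y - φ y) :
    (x, p + gradient φ x) ∈ superdiffGraph A u := by
  obtain ⟨hxA, ψ, hψ, hmax, hgrad⟩ := hxp
  refine ⟨hxA, fun y => ψ y + φ y, hψ.add hφ, ?_, ?_⟩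
  · simpa only [sub_sub, add_comm] using hmax
  · have hφ' := (hφ.differentiable one_ne_zero x).hasGradientAt
    rw [hasGradientAt_iff_hasFDerivAt] at *
    simpa using hgrad.fun_add hφ'

lemma add_gradient_mem_closure_superdiffGraph (hφ : ContDiff ℝ 1 φ)
    (hxp : (x, p) ∈ closure (superdiffGraph A fun y => u y - φ y)) :
    (x, p + gradient φ x) ∈ closure (superdiffGraph A u) := by
  have hcont := continuous_gradient_of_contDiff hφ
  exact map_mem_closure (f := fun z : E × E => (z.1, z.2 + gradient φ z.1)) (by fun_prop) hxp
    fun _ hz => add_gradient_mem_superdiffGraph hφ hz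

lemma inv_smul_mem_superdiffGraph {c : ℝ} (hc : 0 < c)
    (hxp : (x, p) ∈ superdiffGraph A fun y => c * u y) : (x, c⁻¹ • p) ∈ superdiffGraph A u := by
  obtain ⟨hxA, φ, hφ, hmax, hgrad⟩ := hxp
  refine ⟨hxA, fun y => c⁻¹ * φ y, contDiff_const.mul hφ, ?_, ?_⟩
  · filter_upwards [hmax] with y hy
    have hmul := mul_le_mul_of_nonneg_left hy (inv_nonneg.2 hc.le)
    simpa only [mul_sub, inv_mul_cancel_left₀ hc.ne'] using hmul
  · rw [hasGradientAt_iff_hasFDerivAt] at *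
    simpa using hgrad.const_mul c⁻¹

lemma inv_smul_mem_closure_superdiffGraph {c : ℝ} (hc : 0 < c)
    (hxp : (x, p) ∈ closure (superdiffGraph A fun y => c * u y)) :
    (x, c⁻¹ • p) ∈ closure (superdiffGraph A u) :=
  map_mem_closure (f := fun z : E × E => (z.1, c⁻¹ • z.2)) (by fun_prop) hxp
    fun _ hz => inv_smul_mem_superdiffGraph hc hz

lemma inner_eq_of_mem_superdiffGraph (hU : U ∈ 𝓝 x) (hxp : (x, p) ∈ superdiffGraph U u)
    {γ : ℝ → E} {d : E} {m : ℝ} (hγ : HasDerivAt γ d 0) (hγ0 : γ 0 = x)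
    (hm : HasDerivAt (fun s => u (γ s)) m 0) : inner ℝ p d = m := by
  obtain ⟨-, φ, -, hmax, hgrad⟩ := hxp
  subst hγ0
  have hmax' : IsLocalMax (fun s => u (γ s) - φ (γ s)) 0 :=
    hγ.continuousAt (hmax.isLocalMax hU)
  have hφγ : HasDerivAt (fun s => φ (γ s)) (inner ℝ p d) 0 := by
    simpa [Function.comp_def] using hgrad.hasFDerivAt.comp_hasDerivAt 0 hγ
  linarith [hmax'.hasDerivAt_eq_zero (hm.sub hφγ)]

lemma norm_le_of_mem_superdiffGraph {K : NNReal} (hU : U ∈ 𝓝 x)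
    (hu : LipschitzOnWith K u U) (hxp : (x, p) ∈ superdiffGraph U u) : ‖p‖ ≤ K := by
  obtain ⟨hxU, φ, -, hmax, hgrad⟩ := hxp
  have hγ : HasDerivAt (fun s : ℝ => x - s • p) (-p) 0 := by
    simpa using ((hasDerivAt_id (0 : ℝ)).smul_const p).const_sub x
  have hγ0 : Tendsto (fun s : ℝ => x - s • p) (𝓝 0) (𝓝 x) := by
    simpa using hγ.continuousAt.tendsto
  have hφγ : HasDerivAt (fun s : ℝ => φ (x - s • p)) (-‖p‖ ^ 2) 0 := by
    have hgrad' : HasFDerivAt φ (InnerProductSpace.toDual ℝ E p) (x - (0 : ℝ) • p) := by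
      simpa using hgrad.hasFDerivAt
    simpa [Function.comp_def] using hgrad'.comp_hasDerivAt 0 hγ
  have hslope : ∀ᶠ s in 𝓝[>] (0 : ℝ),
      -(K * ‖p‖) ≤ s⁻¹ • (φ (x - (0 + s) • p) - φ (x - (0 : ℝ) • p)) := by
    filter_upwards [self_mem_nhdsWithin, nhdsWithin_le_nhds (hγ0.eventually hU),
      nhdsWithin_le_nhds (hγ0.eventually (hmax.isLocalMax hU))] with s (hs : 0 < s) hsU hle
    have hlip : u x - u (x - s • p) ≤ K * (s * ‖p‖) := by
      simpa [dist_eq_norm, norm_smul, abs_of_pos hs] using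
        (le_abs_self _).trans (hu.dist_le_mul x hxU _ hsU)
    rw [zero_add, zero_smul, sub_zero, smul_eq_mul, le_inv_mul_iff₀ hs]
    linarith
  have hsq := ge_of_tendsto hφγ.tendsto_slope_zero_right hslope
  nlinarith [norm_nonneg p]

end Superdifferential

section Hypertangent

variable {E : Type*} [NormedAddCommGroup E] [NormedSpace ℝ E] {A U : Set E} {x₀ η : E}

/-- `η` is a hypertangent direction at `x₀` leading from `A` into `U`: all short enough steps
from points of `A` near `x₀`, in directions close to `η`, end in `U`. With `A = closure U` this is
Clarke's interior cone condition. -/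
def IsHypertangentAt (A U : Set E) (x₀ η : E) : Prop :=
  ∀ᶠ q : E × ℝ × E in 𝓝[A] x₀ ×ˢ 𝓝[>] 0 ×ˢ 𝓝 η, q.1 + q.2.1 • q.2.2 ∈ U

lemma tendsto_add_smul_nhds (A : Set E) (x₀ η : E) :
    Tendsto (fun q : E × ℝ × E => q.1 + q.2.1 • q.2.2) (𝓝[A] x₀ ×ˢ 𝓝[>] 0 ×ˢ 𝓝 η) (𝓝 x₀) := by
  have hcont : Tendsto (fun q : E × ℝ × E => q.1 + q.2.1 • q.2.2) (𝓝 (x₀, 0, η)) (𝓝 x₀) :=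
    Continuous.tendsto' (by fun_prop) _ _ (by simp)
  rw [nhds_prod_eq, nhds_prod_eq] at hcont
  exact hcont.mono_left (prod_mono nhdsWithin_le_nhds (prod_mono nhdsWithin_le_nhds le_rfl))

lemma isHypertangentAt_of_mem_nhds (hU : U ∈ 𝓝 x₀) (η : E) : IsHypertangentAt A U x₀ η :=
  (tendsto_add_smul_nhds A x₀ η).eventually hU

lemma IsHypertangentAt.tendsto_add_smul (hη : IsHypertangentAt A U x₀ η) :
    Tendsto (fun q : E × ℝ × E => q.1 + q.2.1 • q.2.2)
      (𝓝[A] x₀ ×ˢ 𝓝[>] 0 ×ˢ 𝓝 η) (𝓝[U] x₀) :=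
  tendsto_nhdsWithin_iff.2 ⟨tendsto_add_smul_nhds A x₀ η, hη⟩

lemma IsHypertangentAt.tendsto_add_smul_self (hη : IsHypertangentAt A U x₀ η) (hx₀ : x₀ ∈ A) :
    Tendsto (fun ε : ℝ => x₀ + ε • η) (𝓝[>] 0) (𝓝[U] x₀) :=
  hη.tendsto_add_smul.comp <| (tendsto_const_pure.mono_right (pure_le_nhdsWithin hx₀)).prodMk
    (tendsto_id.prodMk tendsto_const_nhds)

lemma isHypertangentAt_of_hasStrictFDerivAt {ρ : E → ℝ} {ρ' : E →L[ℝ] ℝ}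
    (hρ : HasStrictFDerivAt ρ ρ' x₀) (hη : ρ' η < 0) (hA : ∀ y ∈ A, ρ y ≤ 0) :
    IsHypertangentAt A {y | ρ y < 0} x₀ η := by
  obtain ⟨c, hcη, hc⟩ : ∃ c : ℝ, ρ' η + c * ‖η‖ < 0 ∧ 0 < c := by
    have hlim : Tendsto (fun c : ℝ => ρ' η + c * ‖η‖) (𝓝[>] 0) (𝓝 (ρ' η)) :=
      tendsto_nhdsWithin_of_tendsto_nhds (Continuous.tendsto' (by fun_prop) _ _ (by simp))
    exact ((hlim.eventually_lt_const hη).and self_mem_nhdsWithin).exists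
  have hstep : Tendsto (fun q : E × ℝ × E => (q.1 + q.2.1 • q.2.2, q.1))
      (𝓝[A] x₀ ×ˢ 𝓝[>] 0 ×ˢ 𝓝 η) (𝓝 (x₀, x₀)) :=
    (tendsto_add_smul_nhds A x₀ η).prodMk_nhds (tendsto_fst.mono_right nhdsWithin_le_nhds)
  have hdir : ∀ᶠ ξ in 𝓝 η, ρ' ξ + c * ‖ξ‖ < 0 :=
    (by fun_prop : Continuous fun ξ => ρ' ξ + c * ‖ξ‖).continuousAt.eventually_lt_const hcη
  filter_upwards [hstep.eventually (hρ.isLittleO.bound hc),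
    prod_mem_prod self_mem_nhdsWithin (prod_mem_prod self_mem_nhdsWithin hdir)]
    with ⟨y, t, ξ⟩ hbound ⟨hy, (ht : 0 < t), (hξ : ρ' ξ + c * ‖ξ‖ < 0)⟩
  have hlin : ρ (y + t • ξ) - ρ y - t * ρ' ξ ≤ c * (t * ‖ξ‖) := by
    simpa [norm_smul, abs_of_pos ht] using (le_abs_self _).trans hbound
  have hneg : t * (ρ' ξ + c * ‖ξ‖) < 0 := mul_neg_of_pos_of_neg ht hξ
  have hρy := hA y hy
  change ρ (y + t • ξ) < 0
  linarith

end Hypertangent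

lemma exists_isHypertangentAt_of_isBdC1With {Ω : Set (Eu n)} {ν : Eu n → Eu n}
    (hΩ : IsBdC1With Ω ν) {x : Eu n} (hx : x ∈ frontier Ω) :
    ∃ η, IsHypertangentAt (closure Ω) Ω x η := by
  obtain ⟨-, -, ρ, hρ, hΩρ, hgrad⟩ := hΩ
  have hclosure : ∀ y ∈ closure Ω, ρ y ≤ 0 := fun y hy =>
    closure_lt_subset_le hρ.continuous continuous_const (hΩρ ▸ hy)
  have hdescent : fderiv ℝ ρ x (-gradient ρ x) < 0 := by
    rw [← inner_gradient_left, inner_neg_right, real_inner_self_eq_norm_sq]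
    have := norm_pos_iff.2 (hgrad x hx).1
    nlinarith
  refine ⟨-gradient ρ x, ?_⟩
  have htangent := isHypertangentAt_of_hasStrictFDerivAt
    (hρ.contDiffAt.hasStrictFDerivAt one_ne_zero) hdescent hclosure
  rwa [← hΩρ] at htangent

lemma tendsto_nhds_of_sq_norm_sub_le {ι E : Type*} [SeminormedAddCommGroup E]
    {l : Filter ι} {f : ι → E} {g : ι → ℝ} {a : E}
    (hfg : ∀ᶠ i in l, ‖f i - a‖ ^ 2 ≤ g i) (hg : Tendsto g l (𝓝 0)) : Tendsto f l (𝓝 a) := by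
  have hsqrt : Tendsto (fun i => √(g i)) l (𝓝 0) := by simpa using hg.sqrt
  exact tendsto_iff_norm_sub_tendsto_zero.2
    (squeeze_zero' (.of_forall fun _ => norm_nonneg _)
      (hfg.mono fun _ => Real.le_sqrt_of_sq_le) hsqrt)

section Doubling

variable {E : Type*} [NormedAddCommGroup E] [InnerProductSpace ℝ E]
  {A C U : Set E} {u w : E → ℝ} {x₀ x y η : E} {ε : ℝ} {K : NNReal}

/-- Soner's doubling of variables in `u + w`: the penalty forces `x - y` to be close to `ε • η`
rather than to `0`, which pushes `x` off the boundary when `η` points inwards. -/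
def doubled (u w : E → ℝ) (η : E) (ε : ℝ) (z : E × E) : ℝ :=
  u z.1 + w z.2 - ε⁻¹ ^ 2 * ‖z.1 - (z.2 + ε • η)‖ ^ 2

lemma exists_isMaxOn_doubled (hC : IsCompact C) (hne : C.Nonempty) (hu : ContinuousOn u C)
    (hw : UpperSemicontinuousOn w C) (η : E) (ε : ℝ) :
    ∃ z ∈ C ×ˢ C, IsMaxOn (doubled u w η ε) (C ×ˢ C) z := by
  refine UpperSemicontinuousOn.exists_isMaxOn (hne.prod hne) (hC.prod hC) ?_
  have hu' : UpperSemicontinuousOn (fun z : E × E => u z.1) (C ×ˢ C) :=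
    (hu.comp continuousOn_fst fun _ hz => hz.1).upperSemicontinuousOn
  have hw' : UpperSemicontinuousOn (fun z : E × E => w z.2) (C ×ˢ C) :=
    hw.comp continuousOn_snd fun _ hz => hz.2
  have hpen : UpperSemicontinuousOn
      (fun z : E × E => -(ε⁻¹ ^ 2 * ‖z.1 - (z.2 + ε • η)‖ ^ 2)) (C ×ˢ C) :=
    (by fun_prop : Continuous _).continuousOn.upperSemicontinuousOn
  unfold doubled
  simpa only [← sub_eq_add_neg] using (hu'.add hw').add hpen

lemma mem_superdiffGraph_of_isLocalMaxOn_doubled [CompleteSpace E] (hx : x ∈ U) (hy : y ∈ A)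
    (hmax : IsLocalMaxOn (doubled u w η ε) (U ×ˢ A) (x, y)) :
    (x, (2 * ε⁻¹ ^ 2) • (x - (y + ε • η))) ∈ superdiffGraph U u ∧
      (y, -(2 * ε⁻¹ ^ 2) • (x - (y + ε • η))) ∈ superdiffGraph A w := by
  have hsmooth (a : E) : ContDiff ℝ 1 fun x' => ε⁻¹ ^ 2 * ‖x' - a‖ ^ 2 :=
    contDiff_const.mul ((contDiff_id.sub contDiff_const).norm_sq ℝ)
  rw [IsLocalMaxOn, nhdsWithin_prod_eq] at hmax
  have hmax_left := (tendsto_id.prodMk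
    (tendsto_const_pure.mono_right (pure_le_nhdsWithin hy))).eventually hmax
  have hmax_right := ((tendsto_const_pure.mono_right
    (pure_le_nhdsWithin hx)).prodMk tendsto_id).eventually hmax
  refine ⟨⟨hx, _, hsmooth (y + ε • η), ?_, hasGradientAt_const_mul_norm_sub_sq _ _ _⟩,
    ⟨hy, _, hsmooth (x - ε • η), ?_, ?_⟩⟩
  · filter_upwards [hmax_left] with x' hx'
    simp only [doubled, id_eq] at hx'
    linarith
  · filter_upwards [hmax_right] with y' hy'
    simp only [doubled, id_eq] at hy'
    have hsymm (y' : E) : ‖y' - (x - ε • η)‖ = ‖x - (y' + ε • η)‖ := by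
      rw [norm_sub_rev]; congr 1; abel
    simp only [hsymm]
    linarith
  · convert hasGradientAt_const_mul_norm_sub_sq (ε⁻¹ ^ 2) (x - ε • η) y using 1
    module

/-- Comparing the maximizer with `(x₀ + ε • η, x₀)`; the penalty absorbs the Lipschitz increment
of `u` by Young's inequality. -/
lemma sq_add_sq_le_of_isMaxOn_doubled (hu : LipschitzOnWith K u C) (hε : 0 < ε) (hx₀ : x₀ ∈ C)
    (hstep : x₀ + ε • η ∈ C) (hstrict : ∀ y ∈ C, u y + w y + ‖y - x₀‖ ^ 2 ≤ u x₀ + w x₀)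
    (hx : x ∈ C) (hy : y ∈ C) (hmax : IsMaxOn (doubled u w η ε) (C ×ˢ C) (x, y)) :
    (ε⁻¹ * ‖x - (y + ε • η)‖) ^ 2 + ‖y - x₀‖ ^ 2 ≤ K ^ 2 * ε ^ 2 + 4 * K * ε * ‖η‖ := by
  set D := ‖x - (y + ε • η)‖ with hD
  have hcompare : u (x₀ + ε • η) + w x₀ ≤ u x + w y - (ε⁻¹ * D) ^ 2 := by
    simpa [doubled, mul_pow, hD] using hmax (mk_mem_prod hstep hx₀)
  have hstep_lip : u x₀ - u (x₀ + ε • η) ≤ K * (ε * ‖η‖) := by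
    simpa [dist_eq_norm, norm_smul, abs_of_pos hε] using
      (le_abs_self _).trans (hu.dist_le_mul _ hx₀ _ hstep)
  have hxy_lip : u x - u y ≤ K * ‖x - y‖ := by
    simpa [dist_eq_norm] using (le_abs_self _).trans (hu.dist_le_mul _ hx _ hy)
  have hxy : ‖x - y‖ ≤ D + ε * ‖η‖ := by
    have := norm_add_le (x - (y + ε • η)) (ε • η)
    rwa [sub_add_eq_sub_sub, sub_add_cancel, norm_smul, Real.norm_of_nonneg hε.le,
      ← sub_add_eq_sub_sub] at this
  have hyoung : K * D ≤ (ε⁻¹ * D) ^ 2 / 2 + K ^ 2 * ε ^ 2 / 2 := by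
    have hKD : K * ε * (ε⁻¹ * D) = K * D := by field_simp
    linarith [two_mul_le_add_sq (K * ε) (ε⁻¹ * D), mul_pow (K : ℝ) ε 2]
  linarith [hstrict y hy, mul_le_mul_of_nonneg_left hxy K.coe_nonneg, sq_nonneg ‖y - x₀‖]

lemma tendsto_of_isMaxOn_doubled (hCA : C ⊆ A) (hCx₀ : C ∈ 𝓝[A] x₀) (hx₀ : x₀ ∈ A) (hUA : U ⊆ A)
    (hη : IsHypertangentAt A U x₀ η) (hu : LipschitzOnWith K u C)
    (hstrict : ∀ y ∈ C, u y + w y + ‖y - x₀‖ ^ 2 ≤ u x₀ + w x₀) {z : ℝ → E × E}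
    (hz : ∀ ε, z ε ∈ C ×ˢ C) (hmax : ∀ ε, IsMaxOn (doubled u w η ε) (C ×ˢ C) (z ε)) :
    Tendsto (fun ε => (z ε).1) (𝓝[>] 0) (𝓝[U] x₀) ∧
      Tendsto (fun ε => (z ε).2) (𝓝[>] 0) (𝓝[A] x₀) := by
  let ξ : ℝ → E := fun ε => η + ε⁻¹ • ((z ε).1 - ((z ε).2 + ε • η))
  have hbound : Tendsto (fun ε : ℝ => K ^ 2 * ε ^ 2 + 4 * K * ε * ‖η‖) (𝓝[>] 0) (𝓝 0) :=
    tendsto_nhdsWithin_of_tendsto_nhds (Continuous.tendsto' (by fun_prop) _ _ (by simp))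
  have hstep : ∀ᶠ ε : ℝ in 𝓝[>] 0, x₀ + ε • η ∈ C :=
    (hη.tendsto_add_smul_self hx₀).eventually (nhdsWithin_mono _ hUA hCx₀)
  have hestimate : ∀ᶠ ε in 𝓝[>] 0, ‖ξ ε - η‖ ^ 2 + ‖(z ε).2 - x₀‖ ^ 2 ≤
      K ^ 2 * ε ^ 2 + 4 * K * ε * ‖η‖ := by
    filter_upwards [self_mem_nhdsWithin, hstep] with ε (hε : 0 < ε) hstepε
    simpa [ξ, norm_smul, abs_of_pos hε] using
      sq_add_sq_le_of_isMaxOn_doubled hu hε (mem_of_mem_nhdsWithin hx₀ hCx₀) hstepε hstrict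
        (hz ε).1 (hz ε).2 (hmax ε)
  have hξ : Tendsto ξ (𝓝[>] 0) (𝓝 η) :=
    tendsto_nhds_of_sq_norm_sub_le
      (hestimate.mono fun _ h => (le_add_of_nonneg_right (sq_nonneg _)).trans h) hbound
  have hy : Tendsto (fun ε => (z ε).2) (𝓝[>] 0) (𝓝[A] x₀) :=
    tendsto_nhdsWithin_iff.2 ⟨tendsto_nhds_of_sq_norm_sub_le
      (hestimate.mono fun _ h => (le_add_of_nonneg_left (sq_nonneg _)).trans h) hbound,
      .of_forall fun ε => hCA (hz ε).2⟩
  have hx : ∀ᶠ ε in 𝓝[>] 0, (z ε).2 + ε • ξ ε = (z ε).1 := by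
    filter_upwards [self_mem_nhdsWithin] with ε (hε : 0 < ε)
    simp only [ξ, smul_add, smul_inv_smul₀ hε.ne']
    abel
  exact ⟨(hη.tendsto_add_smul.comp (hy.prodMk (tendsto_id.prodMk hξ))).congr' hx, hy⟩

end Doubling

lemma exists_isCompact_subset_of_isLocallyClosed {X : Type*} [TopologicalSpace X]
    [LocallyCompactSpace X] {A s : Set X} (hA : IsLocallyClosed A) {x : X} (hx : x ∈ A)
    (hs : s ∈ 𝓝[A] x) : ∃ C, IsCompact C ∧ C ⊆ A ∧ C ∈ 𝓝[A] x ∧ C ⊆ s := by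
  have := hA.locallyCompactSpace
  rw [nhdsWithin_eq_map_subtype_coe hx] at hs ⊢
  obtain ⟨C, hCx, hCs, hC⟩ := local_compact_nhds hs
  exact ⟨(↑) '' C, hC.image continuous_subtype_val, Subtype.coe_image_subset A C,
    image_mem_map hCx, image_subset_iff.2 hCs⟩

section SumRule

variable {E : Type*} [NormedAddCommGroup E] [InnerProductSpace ℝ E] [ProperSpace E]
  {A C U : Set E} {u w : E → ℝ} {x₀ P η : E} {K : NNReal}

lemma exists_mem_closure_superdiffGraph_of_strict_max (hC : IsCompact C) (hCA : C ⊆ A)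
    (hCx₀ : C ∈ 𝓝[A] x₀) (hx₀ : x₀ ∈ A) (hU : IsOpen U) (hUA : U ⊆ A)
    (hη : IsHypertangentAt A U x₀ η) (hu : LipschitzOnWith K u A)
    (hw : UpperSemicontinuousOn w A)
    (hstrict : ∀ y ∈ C, u y + w y + ‖y - x₀‖ ^ 2 ≤ u x₀ + w x₀) :
    ∃ q, (x₀, q) ∈ closure (superdiffGraph U u) ∧ (x₀, -q) ∈ closure (superdiffGraph A w) := by
  choose z hzC hmax using exists_isMaxOn_doubled hC ⟨x₀, mem_of_mem_nhdsWithin hx₀ hCx₀⟩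
    (hu.continuousOn.mono hCA) (hw.mono hCA) η
  obtain ⟨hx, hy⟩ :=
    tendsto_of_isMaxOn_doubled hCA hCx₀ hx₀ hUA hη (hu.mono hCA) hstrict hzC hmax
  let p : ℝ → E := fun ε => (2 * ε⁻¹ ^ 2) • ((z ε).1 - ((z ε).2 + ε • η))
  have hgraph : ∀ᶠ ε in 𝓝[>] 0,
      ((z ε).1, p ε) ∈ superdiffGraph U u ∧ ((z ε).2, -p ε) ∈ superdiffGraph A w := by
    have hC' : ∀ᶠ y in 𝓝[A] x₀, C ∈ 𝓝[A] y := eventually_eventually_nhdsWithin.2 hCx₀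
    filter_upwards [hx.eventually self_mem_nhdsWithin,
      hx.eventually (nhdsWithin_mono _ hUA hC'), hy.eventually hC'] with ε hxU hCx hCy
    have hlocal : IsLocalMaxOn (doubled u w η ε) (U ×ˢ A) ((z ε).1, (z ε).2) :=
      (hmax ε).filter_mono
        (le_principal_iff.2 (nhdsWithin_prod (nhdsWithin_mono _ hUA hCx) hCy))
    simpa only [p, neg_smul] using
      mem_superdiffGraph_of_isLocalMaxOn_doubled hxU (hCA (hzC ε).2) hlocal
  have hp : ∀ᶠ ε in 𝓝[>] 0, p ε ∈ closedBall 0 K := hgraph.mono fun ε hε =>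
    mem_closedBall_zero_iff.2
      (norm_le_of_mem_superdiffGraph (hU.mem_nhds hε.1.1) (hu.mono hUA) hε.1)
  obtain ⟨q, -, hq⟩ :=
    (isCompact_closedBall (0 : E) K).exists_mapClusterPt_of_frequently hp.frequently
  obtain ⟨f, hf, hpq⟩ := mapClusterPt_iff_ultrafilter.1 hq
  refine ⟨q, mem_closure_of_tendsto ((hx.mono_left hf).mono_right nhdsWithin_le_nhds |>.prodMk_nhds
      hpq) (hf (hgraph.mono fun _ h => h.1)),
    mem_closure_of_tendsto ((hy.mono_left hf).mono_right nhdsWithin_le_nhds |>.prodMk_nhds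
      hpq.neg) (hf (hgraph.mono fun _ h => h.2))⟩

/-- After subtracting the test function and a quadratic, `x₀` is a strict maximum and the
doubled maximizers supply the two summands. -/
theorem exists_mem_closure_superdiffGraph_add (hA : IsLocallyClosed A) (hU : IsOpen U)
    (hUA : U ⊆ A) (hη : IsHypertangentAt A U x₀ η) (hu : LipschitzOnWith K u A)
    (hw : UpperSemicontinuousOn w A) (hP : (x₀, P) ∈ superdiffGraph A fun y => u y + w y) :
    ∃ q, (x₀, q) ∈ closure (superdiffGraph U u) ∧
      (x₀, P - q) ∈ closure (superdiffGraph A w) := by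
  obtain ⟨hx₀ : x₀ ∈ A, φ, hφ, hmax, hgrad⟩ := hP
  let χ : E → ℝ := fun y => φ y + 1 * ‖y - x₀‖ ^ 2
  have hχ : ContDiff ℝ 1 χ :=
    hφ.add (contDiff_const.mul ((contDiff_id.sub contDiff_const).norm_sq ℝ))
  have hχP : gradient χ x₀ = P := by
    have hquad := hasGradientAt_const_mul_norm_sub_sq 1 x₀ x₀
    rw [hasGradientAt_iff_hasFDerivAt] at hgrad hquad
    refine HasGradientAt.gradient (hasGradientAt_iff_hasFDerivAt.2 ?_)
    simpa [χ] using hgrad.fun_add hquad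
  obtain ⟨C, hC, hCA, hCx₀, hCmax⟩ := exists_isCompact_subset_of_isLocallyClosed hA hx₀ hmax
  have hstrict : ∀ y ∈ C, u y + (w y - χ y) + ‖y - x₀‖ ^ 2 ≤ u x₀ + (w x₀ - χ x₀) := by
    intro y hy
    have hle : u y + w y - φ y ≤ u x₀ + w x₀ - φ x₀ := hCmax hy
    simp only [χ, sub_self, norm_zero]
    linarith
  have hw' : UpperSemicontinuousOn (fun y => w y - χ y) A := by
    simpa only [sub_eq_add_neg] using
      hw.add hχ.continuous.fun_neg.continuousOn.upperSemicontinuousOn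
  obtain ⟨q, hqu, hqw⟩ := exists_mem_closure_superdiffGraph_of_strict_max hC hCA hCx₀ hx₀ hU hUA
    hη hu hw' hstrict
  refine ⟨q, hqu, ?_⟩
  simpa only [hχP, neg_add_eq_sub] using add_gradient_mem_closure_superdiffGraph hχ hqw

end SumRule

/-- The Lyapunov function `∫₀ᵀ ‖X t x‖ dt` of the flow `X`: its derivative along the flow is
`‖X T x‖ - ‖x‖`, which is negative wherever the flow has contracted by time `T`. -/
def lyapunov {E : Type*} [Norm E] (X : ℝ → E → E) (T : ℝ) (x : E) : ℝ :=
  ∫ t in (0 : ℝ)..T, ‖X t x‖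

lemma lyapunov_nonneg {E : Type*} [SeminormedAddCommGroup E] (X : ℝ → E → E) {T : ℝ}
    (hT : 0 ≤ T) (x : E) : 0 ≤ lyapunov X T x :=
  intervalIntegral.integral_nonneg hT fun _ _ => norm_nonneg _

section Flow

variable {E : Type*} [NormedAddCommGroup E] [NormedSpace ℝ E] {b : E → E} {X : ℝ → E → E}
  {K : NNReal} {t T : ℝ}

/-- `X` is a global flow of the autonomous vector field `b`: `t ↦ X t x` solves `ẏ = b y` with
initial value `x`. -/
structure IsFlow (b : E → E) (X : ℝ → E → E) : Prop where
  map_zero (x : E) : X 0 x = x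
  hasDerivAt (x : E) (t : ℝ) : HasDerivAt (fun s => X s x) (b (X t x)) t

namespace IsFlow

lemma continuous_time (hX : IsFlow b X) (x : E) : Continuous fun t => X t x :=
  continuous_iff_continuousAt.2 fun t => (hX.hasDerivAt x t).continuousAt

lemma lipschitzWith (hX : IsFlow b X) (hb : LipschitzWith K b) (ht : 0 ≤ t) :
    LipschitzWith (Real.toNNReal (Real.exp (K * t))) (X t) := by
  refine LipschitzWith.of_dist_le_mul fun x y => ?_
  have hgronwall := dist_le_of_trajectories_ODE (v := fun _ => b) (fun _ => hb)
    (hX.continuous_time x).continuousOn (fun s _ => (hX.hasDerivAt x s).hasDerivWithinAt)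
    (hX.continuous_time y).continuousOn (fun s _ => (hX.hasDerivAt y s).hasDerivWithinAt)
    le_rfl t ⟨ht, le_rfl⟩
  simpa [hX.map_zero, mul_comm, (Real.exp_pos _).le] using hgronwall

lemma apply_apply (hX : IsFlow b X) (hb : LipschitzWith K b) (t s : ℝ) (x : E) :
    X t (X s x) = X (t + s) x := by
  have huniq := ODE_solution_unique_univ (v := fun _ => b) (s := fun _ => univ) (t₀ := 0)
    (f := fun t => X t (X s x)) (g := fun t => X (t + s) x) (fun _ => hb.lipschitzOnWith)
    (fun t => ⟨hX.hasDerivAt _ t, trivial⟩)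
    (fun t => ⟨(hX.hasDerivAt x (t + s)).comp_add_const t s, trivial⟩) (by simp [hX.map_zero])
  exact congrFun huniq t

lemma tendstoLocallyUniformly (hX : IsFlow b X) (hb : LipschitzWith K b)
    (hattr : ∀ x, Tendsto (fun t => X t x) atTop (𝓝 0))
    (hstable : ∀ ε > (0 : ℝ), ∃ δ > (0 : ℝ), ∀ x, ‖x‖ < δ → ∀ t ≥ (0 : ℝ), ‖X t x‖ < ε) :
    TendstoLocallyUniformly X (fun _ => 0) atTop := by
  refine Metric.tendstoLocallyUniformly_iff.2 fun ε hε x => ?_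
  obtain ⟨δ, hδ, hstableδ⟩ := hstable ε hε
  obtain ⟨T, hTx, hT⟩ : ∃ T, ‖X T x‖ < δ ∧ 0 ≤ T :=
    (((hattr x).norm.eventually_lt_const (by simpa using hδ)).and (eventually_ge_atTop 0)).exists
  have hTcont : Continuous fun y => ‖X T y‖ := (hX.lipschitzWith hb hT).continuous.norm
  refine ⟨{y | ‖X T y‖ < δ}, hTcont.continuousAt.eventually_lt_const hTx, ?_⟩
  filter_upwards [eventually_ge_atTop T] with t ht y hy
  have hlt := hstableδ _ hy (t - T) (sub_nonneg.2 ht)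
  rwa [hX.apply_apply hb, sub_add_cancel, ← dist_zero_left] at hlt

end IsFlow

lemma GAS.isFlow {b : Eu n → Eu n} {X : ℝ → Eu n → Eu n} (hX : GAS b X) : IsFlow b X :=
  ⟨hX.1, hX.2.1⟩

lemma GAS.exists_norm_lt {b : Eu n → Eu n} {X : ℝ → Eu n → Eu n} (hX : GAS b X)
    (hb : LipschitzWith K b) {S : Set (Eu n)} (hS : IsCompact S) {r : ℝ} (hr : 0 < r) :
    ∃ T ≥ 0, ∀ x ∈ S, ‖X T x‖ < r := by
  have hunif := tendstoLocallyUniformly_iff_forall_isCompact.1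
    (hX.isFlow.tendstoLocallyUniformly hb hX.2.2.1 hX.2.2.2) S hS
  obtain ⟨T, hT, hT0⟩ :=
    ((Metric.tendstoUniformlyOn_iff.1 hunif r hr).and (eventually_ge_atTop 0)).exists
  exact ⟨T, hT0, fun x hx => by simpa using hT x hx⟩

namespace IsFlow

lemma intervalIntegrable_norm (hX : IsFlow b X) (x : E) (s t : ℝ) :
    IntervalIntegrable (fun t => ‖X t x‖) MeasureTheory.volume s t :=
  (hX.continuous_time x).norm.intervalIntegrable s t

lemma lipschitzWith_lyapunov (hX : IsFlow b X) (hb : LipschitzWith K b) (hT : 0 ≤ T) :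
    LipschitzWith (Real.toNNReal (Real.exp (K * T) * T)) (lyapunov X T) := by
  refine LipschitzWith.of_dist_le_mul fun x y => ?_
  have hbound : ∀ t ∈ uIoc 0 T, ‖‖X t x‖ - ‖X t y‖‖ ≤ Real.exp (K * T) * dist x y := by
    intro t ht
    rw [uIoc_of_le hT] at ht
    calc ‖‖X t x‖ - ‖X t y‖‖ ≤ dist (X t x) (X t y) :=
        (abs_norm_sub_norm_le _ _).trans_eq (dist_eq_norm _ _).symm
      _ ≤ Real.exp (K * t) * dist x y := by
        simpa [(Real.exp_pos _).le] using (hX.lipschitzWith hb ht.1.le).dist_le_mul x y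
      _ ≤ Real.exp (K * T) * dist x y := by gcongr; exact ht.2
  have hintegral := intervalIntegral.norm_integral_le_of_norm_le_const hbound
  rw [intervalIntegral.integral_sub (hX.intervalIntegrable_norm x 0 T)
    (hX.intervalIntegrable_norm y 0 T), sub_zero, abs_of_nonneg hT] at hintegral
  rw [Real.coe_toNNReal _ (by positivity), dist_eq_norm (lyapunov X T x), mul_right_comm]
  exact hintegral

/-- By the semigroup law, `∫₀ᵀ ‖X t (X s x)‖ dt = ∫ₛ^(T+s) ‖X t x‖ dt`. -/
lemma hasDerivAt_lyapunov (hX : IsFlow b X) (hb : LipschitzWith K b) (T : ℝ) (x : E) :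
    HasDerivAt (fun s => lyapunov X T (X s x)) (‖X T x‖ - ‖x‖) 0 := by
  have hshift : (fun s => lyapunov X T (X s x)) =
      fun s => (∫ t in (0 : ℝ)..(T + s), ‖X t x‖) - ∫ t in (0 : ℝ)..s, ‖X t x‖ := by
    funext s
    simp only [lyapunov, hX.apply_apply hb]
    rw [intervalIntegral.integral_comp_add_right (fun t => ‖X t x‖) s, zero_add,
      intervalIntegral.integral_interval_sub_left] <;> exact hX.intervalIntegrable_norm x _ _
  have hprimitive (s : ℝ) : HasDerivAt (fun s => ∫ t in (0 : ℝ)..s, ‖X t x‖) ‖X s x‖ s :=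
    ((hX.continuous_time x).norm).integral_hasStrictDerivAt 0 s |>.hasDerivAt
  rw [hshift]
  simpa [hX.map_zero] using ((hprimitive (T + 0)).comp_const_add T 0).fun_sub (hprimitive 0)

end IsFlow

end Flow

lemma IsFlow.inner_eq_of_mem_superdiffGraph_lyapunov {E : Type*} [NormedAddCommGroup E]
    [InnerProductSpace ℝ E] [CompleteSpace E] {b : E → E} {X : ℝ → E → E} {K : NNReal} {T : ℝ}
    (hX : IsFlow b X) (hb : LipschitzWith K b) {U : Set E} (hU : IsOpen U) {x p : E}
    (hxp : (x, p) ∈ superdiffGraph U (lyapunov X T)) : inner ℝ p (b x) = ‖X T x‖ - ‖x‖ := by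
  have hγ : HasDerivAt (fun s => X s x) (b x) 0 := by
    simpa [hX.map_zero] using hX.hasDerivAt x 0
  exact inner_eq_of_mem_superdiffGraph (hU.mem_nhds hxp.1) hxp hγ (hX.map_zero x)
    (hX.hasDerivAt_lyapunov hb T x)

section Viscosity

variable {E : Type*} [NormedAddCommGroup E] [InnerProductSpace ℝ E] [ProperSpace E]
  {U : Set E} {H : E → E → ℝ}

/-- The gradient of a test function splits by the sum rule, and `H` is convex in it. -/
lemma le_of_mem_closure_superdiffGraph_convex_comb {v f g h : E → ℝ} {K : NNReal} {a c : ℝ}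
    (hU : IsOpen U) (hH : Continuous fun z : E × E => H z.1 z.2)
    (hconv : ∀ x, ConvexOn ℝ univ (H x)) (hg : Continuous g) (hh : Continuous h)
    (hf : LipschitzOnWith K f U) (hv : UpperSemicontinuousOn v U)
    (hvg : ∀ z ∈ superdiffGraph U v, H z.1 z.2 ≤ g z.1)
    (hfh : ∀ z ∈ superdiffGraph U f, H z.1 z.2 ≤ h z.1)
    (ha : 0 < a) (hc : 0 < c) (hac : a + c = 1) {x p : E}
    (hxp : (x, p) ∈ closure (superdiffGraph U fun y => a * v y + c * f y)) :
    H x p ≤ a * g x + c * h x := by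
  refine closure_minimal (t := {z : E × E | H z.1 z.2 ≤ a * g z.1 + c * h z.1})
    (fun ⟨x, p⟩ hxp => ?_) (isClosed_le hH (by fun_prop)) hxp
  have hcf : LipschitzOnWith (‖c‖₊ * K) (fun y => c * f y) U :=
    (lipschitzWith_smul c).comp_lipschitzOnWith hf
  have hav : UpperSemicontinuousOn (fun y => a * v y) U :=
    (continuous_const_mul a).comp_upperSemicontinuousOn hv (monotone_mul_left_of_nonneg ha.le)
  obtain ⟨q, hqf, hqv⟩ := exists_mem_closure_superdiffGraph_add hU.isLocallyClosed hU subset_rfl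
    (isHypertangentAt_of_mem_nhds (hU.mem_nhds hxp.1) 0) hcf hav
    (by simpa only [add_comm (c * f _)] using hxp)
  have hqv' := closure_minimal (t := {z : E × E | H z.1 z.2 ≤ g z.1}) hvg
    (isClosed_le hH (by fun_prop)) (inv_smul_mem_closure_superdiffGraph ha hqv)
  have hqf' := closure_minimal (t := {z : E × E | H z.1 z.2 ≤ h z.1}) hfh
    (isClosed_le hH (by fun_prop)) (inv_smul_mem_closure_superdiffGraph hc hqf)
  have hsplit : p = a • a⁻¹ • (p - q) + c • c⁻¹ • q := by
    rw [smul_inv_smul₀ ha.ne', smul_inv_smul₀ hc.ne', sub_add_cancel]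
  calc H x p = H x (a • a⁻¹ • (p - q) + c • c⁻¹ • q) := by rw [← hsplit]
    _ ≤ a * H x (a⁻¹ • (p - q)) + c * H x (c⁻¹ • q) :=
      (hconv x).2 (mem_univ _) (mem_univ _) ha.le hc.le hac
    _ ≤ a * g x + c * h x := by gcongr <;> assumption

end Viscosity

lemma ViscSub.le_of_mem_superdiffGraph {H : Eu n → Eu n → ℝ} {A : Set (Eu n)} {u : Eu n → ℝ}
    (hu : ViscSub H A u) {z : Eu n × Eu n} (hz : z ∈ superdiffGraph A u) : H z.1 z.2 ≤ 0 := by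
  obtain ⟨hzA, φ, hφ, hmax, hgrad⟩ := hz
  exact hgrad.gradient ▸ hu φ hφ z.1 hzA hmax

lemma ViscSup.nonneg_of_mem_closure_superdiffGraph_neg {H : Eu n → Eu n → ℝ} {A : Set (Eu n)}
    {w : Eu n → ℝ} (hw : ViscSup H A w) (hH : Continuous fun z : Eu n × Eu n => H z.1 z.2)
    {x p : Eu n} (hxp : (x, p) ∈ closure (superdiffGraph A fun y => -w y)) : 0 ≤ H x (-p) := by
  refine closure_minimal (t := {z : Eu n × Eu n | 0 ≤ H z.1 (-z.2)}) (fun z hz => ?_)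
    (isClosed_le continuous_const (hH.comp (continuous_fst.prodMk continuous_snd.neg))) hxp
  obtain ⟨hzA, φ, hφ, hmax, hgrad⟩ := hz
  have hmin : IsLocalMinOn (fun y => w y - -φ y) A z.1 := by
    simpa only [neg_sub, sub_neg_eq_add, add_comm] using hmax.neg
  have hneg : HasGradientAt (fun y => -φ y) (-z.2) z.1 := by
    rw [hasGradientAt_iff_hasFDerivAt] at *
    simpa using hgrad.fun_neg
  have hnonneg := hw _ hφ.neg z.1 hzA hmin
  rwa [hneg.gradient] at hnonneg

lemma ViscSup.exists_mem_closure_superdiffGraph_of_isLocalMaxOn {H : Eu n → Eu n → ℝ}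
    {A U : Set (Eu n)} {u w : Eu n → ℝ} {K : NNReal} {x₀ η : Eu n} (hw : ViscSup H A w)
    (hH : Continuous fun z : Eu n × Eu n => H z.1 z.2) (hwA : LowerSemicontinuousOn w A)
    (hA : IsLocallyClosed A) (hU : IsOpen U) (hUA : U ⊆ A) (hη : IsHypertangentAt A U x₀ η)
    (hu : LipschitzOnWith K u A) (hx₀ : x₀ ∈ A)
    (hmax : IsLocalMaxOn (fun y => u y - w y) A x₀) :
    ∃ p, (x₀, p) ∈ closure (superdiffGraph U u) ∧ 0 ≤ H x₀ p := by
  have hcrit : (x₀, (0 : Eu n)) ∈ superdiffGraph A fun y => u y + -w y :=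
    ⟨hx₀, fun _ => 0, contDiff_const, by simpa only [sub_zero, ← sub_eq_add_neg] using hmax,
      hasGradientAt_const x₀ 0⟩
  obtain ⟨p, hpu, hpw⟩ :=
    exists_mem_closure_superdiffGraph_add hA hU hUA hη hu hwA.neg hcrit
  refine ⟨p, hpu, ?_⟩
  simpa using hw.nonneg_of_mem_closure_superdiffGraph_neg hH hpw

lemma ViscSup.exists_isMaxOn_mem {H : Eu n → Eu n → ℝ} {Ω N : Set (Eu n)} {u w : Eu n → ℝ}
    {K : NNReal} (hw : ViscSup H (closure Ω) w)
    (hH : Continuous fun z : Eu n × Eu n => H z.1 z.2)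
    (hwΩ : LowerSemicontinuousOn w (closure Ω)) (hΩ : IsOpen Ω) (hΩb : Bornology.IsBounded Ω)
    (hne : Ω.Nonempty) (hη : ∀ x ∈ frontier Ω, ∃ η, IsHypertangentAt (closure Ω) Ω x η)
    (hu : LipschitzOnWith K u (closure Ω))
    (hstrict : ∀ x ∈ closure Ω \ N, ∀ p, (x, p) ∈ closure (superdiffGraph Ω u) → H x p < 0) :
    ∃ x₀ ∈ closure Ω ∩ N, IsMaxOn (fun y => u y - w y) (closure Ω) x₀ := by
  have husc : UpperSemicontinuousOn (fun y => u y - w y) (closure Ω) := by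
    simpa only [sub_eq_add_neg, Pi.neg_apply] using
      hu.continuousOn.upperSemicontinuousOn.add hwΩ.neg
  obtain ⟨x₀, hx₀, hmax⟩ := husc.exists_isMaxOn hne.closure hΩb.isCompact_closure
  obtain ⟨η, hηx₀⟩ : ∃ η, IsHypertangentAt (closure Ω) Ω x₀ η := by
    by_cases hx₀Ω : x₀ ∈ Ω
    · exact ⟨0, isHypertangentAt_of_mem_nhds (hΩ.mem_nhds hx₀Ω) 0⟩
    · exact hη x₀ (hΩ.frontier_eq ▸ ⟨hx₀, hx₀Ω⟩)
  obtain ⟨p, hpu, hp⟩ := hw.exists_mem_closure_superdiffGraph_of_isLocalMaxOn hH hwΩ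
    isClosed_closure.isLocallyClosed hΩ subset_closure hηx₀ hu hx₀ hmax.localize
  exact ⟨x₀, ⟨hx₀, by_contra fun hx₀N => (hstrict x₀ ⟨hx₀, hx₀N⟩ p hpu).not_ge hp⟩, hmax⟩

section Hamiltonian

variable {M : Matrix (Fin n) (Fin n) ℝ} {α : Eu n → Matrix (Fin n) (Fin n) ℝ}
  {b : Eu n → Eu n}

lemma dotp_eq_inner (x y : Eu n) : dotp x y = inner ℝ x y := by
  simp [dotp, PiLp.inner_apply, mul_comm]

lemma mquad_smul (M : Matrix (Fin n) (Fin n) ℝ) (c : ℝ) (p : Eu n) :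
    mquad M (c • p) = c ^ 2 * mquad M p := by
  simp only [mquad, Finset.mul_sum, PiLp.smul_apply, smul_eq_mul]
  exact Finset.sum_congr rfl fun i _ => Finset.sum_congr rfl fun j _ => by ring

lemma mquad_convex_comb (M : Matrix (Fin n) (Fin n) ℝ) {s t : ℝ} (hst : s + t = 1)
    (p q : Eu n) :
    mquad M (s • p + t • q) = s * mquad M p + t * mquad M q - s * t * mquad M (p - q) := by
  obtain rfl : t = 1 - s := eq_sub_of_add_eq' hst
  simp only [mquad, Finset.mul_sum, ← Finset.sum_add_distrib, ← Finset.sum_sub_distrib]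
  refine Finset.sum_congr rfl fun i _ => Finset.sum_congr rfl fun j _ => ?_
  simp only [PiLp.add_apply, PiLp.sub_apply, PiLp.smul_apply, smul_eq_mul]
  ring

lemma convexOn_mquad (hM : ∀ p : Eu n, 0 ≤ mquad M p) : ConvexOn ℝ univ (mquad M) := by
  refine ⟨convex_univ, fun p _ q _ s t hs ht hst => ?_⟩
  rw [mquad_convex_comb M hst, smul_eq_mul, smul_eq_mul]
  exact sub_le_self _ (mul_nonneg (mul_nonneg hs ht) (hM _))

lemma continuous_mquad (hα : Continuous α) :
    Continuous fun z : Eu n × Eu n => mquad (α z.1) z.2 := by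
  unfold mquad
  fun_prop

lemma continuous_ham (hα : Continuous α) (hb : Continuous b) :
    Continuous fun z : Eu n × Eu n => Ham α b z.1 z.2 := by
  have hquad := continuous_mquad hα
  simp only [Ham, dotp_eq_inner]
  fun_prop

lemma convexOn_ham {x : Eu n} (hα : ∀ p : Eu n, 0 ≤ mquad (α x) p) :
    ConvexOn ℝ univ (Ham α b x) := by
  have hlin : ConvexOn ℝ univ fun p => dotp (b x) p := by
    simp only [dotp_eq_inner]
    exact (innerₛₗ ℝ (b x)).convexOn convex_univ
  exact (convexOn_mquad hα).add hlin

lemma ham_smul (x p : Eu n) (κ : ℝ) :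
    Ham α b x (κ • p) = κ * (κ * mquad (α x) p + inner ℝ p (b x)) := by
  simp only [Ham, mquad_smul, dotp_eq_inner, inner_smul_right, real_inner_comm]
  ring

end Hamiltonian

section Comparison

variable {θ : ℝ} {α : Eu n → Matrix (Fin n) (Fin n) ℝ} {b : Eu n → Eu n} {X : ℝ → Eu n → Eu n}
  {Ω S : Set (Eu n)} {K : NNReal} {v w : Eu n → ℝ}

lemma IsFlow.ham_le_of_mem_superdiffGraph_lyapunov (hX : IsFlow b X) (hb : LipschitzWith K b)
    (hα : ∀ x, memS θ (α x)) (hθ : 0 ≤ θ) (hΩ : IsOpen Ω) {T κ : ℝ} (hκ : 0 < κ)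
    {L : NNReal} (hL : LipschitzWith L (lyapunov X T)) {z : Eu n × Eu n}
    (hz : z ∈ superdiffGraph Ω fun y => κ * lyapunov X T y) :
    Ham α b z.1 z.2 ≤ κ * (κ * (θ⁻¹ * L ^ 2) + (‖X T z.1‖ - ‖z.1‖)) := by
  have hz' := inv_smul_mem_superdiffGraph hκ hz
  have hquad : mquad (α z.1) (κ⁻¹ • z.2) ≤ θ⁻¹ * L ^ 2 := by
    refine ((hα z.1).2 _).2.trans ?_
    gcongr
    exact norm_le_of_mem_superdiffGraph (hΩ.mem_nhds hz.1) hL.lipschitzOnWith hz'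
  calc Ham α b z.1 z.2 = Ham α b z.1 (κ • κ⁻¹ • z.2) := by rw [smul_inv_smul₀ hκ.ne']
    _ = κ * (κ * mquad (α z.1) (κ⁻¹ • z.2) + (‖X T z.1‖ - ‖z.1‖)) := by
      rw [ham_smul, hX.inner_eq_of_mem_superdiffGraph_lyapunov hb hΩ hz']
    _ ≤ κ * (κ * (θ⁻¹ * L ^ 2) + (‖X T z.1‖ - ‖z.1‖)) := by gcongr

/-- The witness is a small multiple of `lyapunov X T`: the transport part of the Hamiltonian is
linear in the factor, the quadratic part is of second order. -/
lemma GAS.exists_subsolution_strict_off_ball (hX : GAS b X) (hb : LipschitzWith K b)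
    (hα : ∀ x, memS θ (α x)) (hθ : 0 ≤ θ) (hΩ : IsOpen Ω) (hS : IsCompact S) {r c : ℝ}
    (hr : 0 < r) (hc : 0 < c) :
    ∃ (f h : Eu n → ℝ) (L : NNReal), LipschitzWith L f ∧ Continuous h ∧
      (∀ x ∈ S, f x ∈ Icc 0 c) ∧ (∀ x ∈ S, r ≤ ‖x‖ → h x < 0) ∧
      ∀ z ∈ superdiffGraph Ω f, Ham α b z.1 z.2 ≤ h z.1 := by
  obtain ⟨T, hT, hTr⟩ := hX.exists_norm_lt hb hS (half_pos hr)
  obtain ⟨L, hL⟩ : ∃ L, LipschitzWith L (lyapunov X T) :=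
    ⟨_, hX.isFlow.lipschitzWith_lyapunov hb hT⟩
  obtain ⟨B, hB⟩ := hS.bddAbove_image hL.continuous.continuousOn
  obtain ⟨κ, ⟨hκL, hκB⟩, hκ⟩ : ∃ κ : ℝ, (κ * (θ⁻¹ * L ^ 2) < r / 2 ∧ κ * B < c) ∧ 0 < κ := by
    have hsmall (a : ℝ) {d : ℝ} (hd : 0 < d) : ∀ᶠ κ : ℝ in 𝓝[>] 0, κ * a < d :=
      nhdsWithin_le_nhds <|
        (continuous_mul_const a).continuousAt.eventually_lt_const (by simpa using hd)
    exact (((hsmall _ (half_pos hr)).and (hsmall B hc)).and self_mem_nhdsWithin).exists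
  have hXcont := (hX.isFlow.lipschitzWith hb hT).continuous
  refine ⟨fun x => κ * lyapunov X T x,
    fun x => κ * (κ * (θ⁻¹ * L ^ 2) + (‖X T x‖ - ‖x‖)), _,
    (lipschitzWith_smul κ).comp hL, by fun_prop, fun x hx => ⟨?_, ?_⟩, fun x hx hrx => ?_,
    fun z hz => hX.isFlow.ham_le_of_mem_superdiffGraph_lyapunov hb hα hθ hΩ hκ hL hz⟩
  · exact mul_nonneg hκ.le (lyapunov_nonneg X hT x)
  · exact (mul_le_mul_of_nonneg_left (hB (mem_image_of_mem _ hx)) hκ.le).trans hκB.le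
  · exact mul_neg_of_pos_of_neg hκ (by linarith [hTr x hx])

lemma ViscSub.ham_neg_of_mem_closure_superdiffGraph_convex_comb {l : ℝ} (hl : l ∈ Ioo 0 1)
    (hv : ViscSub (Ham α b) Ω v) (hvc : ContinuousOn v Ω) (hθ : 0 ≤ θ) (hαc : Continuous α)
    (hα : ∀ x, memS θ (α x)) (hb : Continuous b) (hΩ : IsOpen Ω) {f h : Eu n → ℝ}
    (hf : LipschitzOnWith K f Ω) (hh : Continuous h)
    (hfh : ∀ z ∈ superdiffGraph Ω f, Ham α b z.1 z.2 ≤ h z.1) {x p : Eu n} (hhx : h x < 0)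
    (hxp : (x, p) ∈ closure (superdiffGraph Ω fun y => (1 - l) * v y + l * f y)) :
    Ham α b x p < 0 := by
  have hconv (x : Eu n) : ConvexOn ℝ univ (Ham α b x) :=
    convexOn_ham fun p => (mul_nonneg hθ (sq_nonneg ‖p‖)).trans ((hα x).2 p).1
  have hle := le_of_mem_closure_superdiffGraph_convex_comb hΩ (continuous_ham hαc hb) hconv
    continuous_zero hh hf hvc.upperSemicontinuousOn
    (fun _ hz => hv.le_of_mem_superdiffGraph hz) hfh (sub_pos.2 hl.2) hl.1 (sub_add_cancel 1 l) hxp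
  simp only [Pi.zero_apply, mul_zero, zero_add] at hle
  exact hle.trans_lt (mul_neg_of_pos_of_neg hl.1 hhx)

/-- Adding to `(1 - l) * v` a small subsolution that is strict off a ball around `0` confines the
maximum of the difference with `w` to that ball. -/
lemma isMaxOn_one_sub_mul_sub_zero {l : ℝ} (hl : l ∈ Ioo 0 1) (hθ : 0 ≤ θ) (hαc : Continuous α)
    (hα : ∀ x, memS θ (α x)) (hΩ : IsOpen Ω) (hΩb : Bornology.IsBounded Ω)
    (h0 : (0 : Eu n) ∈ closure Ω)
    (hη : ∀ x ∈ frontier Ω, ∃ η, IsHypertangentAt (closure Ω) Ω x η) {Kb : NNReal}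
    (hb : LipschitzWith Kb b) (hX : GAS b X) (hvK : LipschitzOnWith K v (closure Ω))
    (hv : ViscSub (Ham α b) Ω v) (hwΩ : LowerSemicontinuousOn w (closure Ω))
    (hw : ViscSup (Ham α b) (closure Ω) w) :
    IsMaxOn (fun y => (1 - l) * v y - w y) (closure Ω) 0 := by
  refine isMaxOn_iff.2 fun x hx => le_of_not_gt fun hlt => ?_
  obtain ⟨c, h0c, hcx⟩ := exists_between hlt
  have hvl : LipschitzOnWith (‖1 - l‖₊ * K) (fun y => (1 - l) * v y) (closure Ω) :=
    (lipschitzWith_smul (1 - l)).comp_lipschitzOnWith hvK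
  have husc : UpperSemicontinuousOn (fun y => (1 - l) * v y - w y) (closure Ω) := by
    simpa only [sub_eq_add_neg, Pi.neg_apply] using
      hvl.continuousOn.upperSemicontinuousOn.add hwΩ.neg
  obtain ⟨r, hr, hrc⟩ := Metric.mem_nhdsWithin_iff.1 (husc 0 h0 c h0c)
  obtain ⟨f, h, L, hfL, hh, hfc, hhneg, hfh⟩ := hX.exists_subsolution_strict_off_ball hb hα hθ hΩ
    hΩb.isCompact_closure hr (sub_pos.2 hcx)
  obtain ⟨x₀, ⟨hx₀, hx₀r⟩, hmax⟩ := hw.exists_isMaxOn_mem (N := ball 0 r)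
    (continuous_ham hαc hb.continuous) hwΩ hΩ hΩb (closure_nonempty_iff.1 ⟨0, h0⟩) hη
    (hvl.add ((lipschitzWith_smul l).comp hfL).lipschitzOnWith)
    fun y hy p hyp => hv.ham_neg_of_mem_closure_superdiffGraph_convex_comb hl
      (hvK.continuousOn.mono subset_closure) hθ hαc hα hb.continuous hΩ hfL.lipschitzOnWith hh hfh
      (hhneg y hy.1 (by simpa using hy.2)) hyp
  have hmaxx : (1 - l) * v x + l * f x - w x ≤ (1 - l) * v x₀ + l * f x₀ - w x₀ := hmax hx
  have hx₀c : (1 - l) * v x₀ - w x₀ < c := hrc ⟨hx₀r, hx₀⟩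
  have hlfx : 0 ≤ l * f x := mul_nonneg hl.1.le (hfc x hx).1
  have hlfx₀ : l * f x₀ ≤ (1 - l) * v x - w x - c :=
    (mul_le_of_le_one_left (hfc x₀ hx₀).1 hl.2.le).trans (hfc x₀ hx₀).2
  linarith

end Comparison

theorem stmt19_general {n : ℕ} (θ₀ : ℝ) (hθ : 0 < θ₀)
    (α : Eu n → Matrix (Fin n) (Fin n) ℝ)
    (hαc : Continuous α) (hαm : ∀ x : Eu n, memS θ₀ (α x))
    (Ω : Set (Eu n)) (b : Eu n → Eu n)
    (hΩ : IsOpen Ω) (hΩb : Bornology.IsBounded Ω) (h0 : (0 : Eu n) ∈ closure Ω)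
    (hη : ∀ x ∈ frontier Ω, ∃ η, IsHypertangentAt (closure Ω) Ω x η)
    (hbl : ∃ K : NNReal, LipschitzWith K b)
    (hgas : ∃ X : ℝ → Eu n → Eu n, GAS b X)
    (v w : Eu n → ℝ)
    (hv_lip : ∃ K : NNReal, LipschitzOnWith K v (closure Ω))
    (hv : ViscSub (Ham α b) Ω v)
    (hw_lsc : LowerSemicontinuousOn w (closure Ω))
    (hw : ViscSup (Ham α b) (closure Ω) w)
    (h0vw : v 0 ≤ w 0) :
    ∀ x ∈ closure Ω, v x ≤ w x := by
  intro x hx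
  obtain ⟨Kb, hb⟩ := hbl
  obtain ⟨X, hX⟩ := hgas
  obtain ⟨K, hvK⟩ := hv_lip
  have hcontract : ∀ᶠ l : ℝ in 𝓝[>] 0, (1 - l) * v x - w x ≤ (1 - l) * v 0 - w 0 := by
    filter_upwards [Ioo_mem_nhdsGT one_pos] with l hl
    exact isMaxOn_one_sub_mul_sub_zero hl hθ.le hαc hαm hΩ hΩb h0 hη hb hX hvK hv hw_lsc hw hx
  have hlim (y : Eu n) : Tendsto (fun l : ℝ => (1 - l) * v y - w y) (𝓝[>] 0) (𝓝 (v y - w y)) :=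
    tendsto_nhdsWithin_of_tendsto_nhds (Continuous.tendsto' (by fun_prop) _ _ (by simp))
  linarith [le_of_tendsto_of_tendsto (hlim x) (hlim 0) hcontract]

/-- Lemma C.1: comparison for the state-constraints problem. -/
theorem stmt19 {n : ℕ} (θ₀ : ℝ) (hθ : θ₀ ∈ Set.Ioc (0:ℝ) 1)
    (α : Eu n → Matrix (Fin n) (Fin n) ℝ)
    (hαc : Continuous α) (hαm : ∀ x : Eu n, memS θ₀ (α x))
    (Ω : Set (Eu n)) (ν : Eu n → Eu n) (b : Eu n → Eu n)
    (hdom : IsBdC1With Ω ν) (h0 : (0 : Eu n) ∈ Ω)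
    (hbl : ∃ K : NNReal, LipschitzWith K b) (hb0 : b 0 = 0)
    (hgas : ∃ X : ℝ → Eu n → Eu n, GAS b X)
    (hin : ∀ x ∈ frontier Ω, dotp (b x) (ν x) < 0)
    (v w : Eu n → ℝ)
    (hv_lip : ∃ K : NNReal, LipschitzOnWith K v (closure Ω))
    (hv : ViscSub (Ham α b) Ω v)
    (hw_lsc : LowerSemicontinuousOn w (closure Ω))
    (hw : ViscSup (Ham α b) (closure Ω) w)
    (h0vw : v 0 ≤ w 0) :
    ∀ x ∈ closure Ω, v x ≤ w x := by
  exact stmt19_general θ₀ hθ.1 α hαc hαm Ω b hdom.1 hdom.2.1 (subset_closure h0)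
    (fun _ hx => exists_isHypertangentAt_of_isBdC1With hdom hx) hbl hgas v w hv_lip hv hw_lsc
    hw h0vw
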